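/- Let F be an algebraically closed field, f ∈ F⟨X_1,…,X_m⟩, and k ≥ 1 such that f is noncentral on M_k(F). Let n ≥ k, let Y_1,…,Y_m be generic n×n matrices over F, and let c_1,…,c_n ∈ R be the coefficients of the characteristic polynomial of f(Y_1,…,Y_m), i.e. the characteristic polynomial equals t^n − c_1 t^{n−1} + c_2 t^{n−2} − ⋯ + (−1)^n c_n. Then the subfield F(c_1,…,c_n) of K = Frac(R) has transcendence degree at least n − k over F. -/

import Mathlib

/-!
Specialising the generic `n × n` matrices to `diag(Y, 0)` with `Y` generic of size `n - 1` turns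
the characteristic polynomial `χ_n` of the value of `f` into `χ_{n-1} · (t - f(0))`. So the algebra
generated by the coefficients of `χ_n` is sent onto an algebra containing the coefficients of
`χ_{n-1}`, while its element `χ_n(f(0)) = det(f(0) - f(Y))` is sent to `0`. By Amitsur's theorem
that element is nonzero as soon as `f` is not constant on matrices of size `n`. Hence the
transcendence degree increases at every size from `k` on, the first time from size `k - 1` to `k`.

For Amitsur's theorem (a nonzero value of `f` at generic matrices has nonzero determinant), index
rows and columns by a cyclic group and twist the entry `x_{ij}` by the power `t ^ w (j - i)`. The
lowest-order coefficient in `t` is supported on one shifted diagonal, and it vanishes nowhere there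
because translating the indices permutes the variables.
-/

universe u

section FreeAlgebraLift

variable {R σ A B n k r : Type*} [CommSemiring R] [Semiring A] [Algebra R A] [Semiring B]
  [Algebra R B] [Fintype n] [DecidableEq n] [Fintype k] [DecidableEq k] [Fintype r] [DecidableEq r]

theorem algHom_freeAlgebra_lift (g : A →ₐ[R] B) (a : σ → A) (f : FreeAlgebra R σ) :
    g (FreeAlgebra.lift R a f) = FreeAlgebra.lift R (fun l ↦ g (a l)) f :=
  DFunLike.congr_fun (FreeAlgebra.lift_unique _ (g.comp (FreeAlgebra.lift R a)) |>.1 <| by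
    ext; simp) f

theorem freeAlgebra_lift_mem (S : Subalgebra R A) {a : σ → A} (ha : ∀ l, a l ∈ S)
    (f : FreeAlgebra R σ) : FreeAlgebra.lift R a f ∈ S :=
  algHom_freeAlgebra_lift S.val (fun l ↦ ⟨a l, ha l⟩) f ▸ Subtype.property _

theorem freeAlgebra_lift_zero (f : FreeAlgebra R σ) :
    FreeAlgebra.lift R (0 : σ → A) f = algebraMap R A (FreeAlgebra.algebraMapInv f) := by
  have hcomp := algHom_freeAlgebra_lift (Algebra.ofId R A) (0 : σ → R) f
  simp only [Pi.zero_apply, map_zero] at hcomp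
  exact hcomp.symm

theorem freeAlgebra_lift_map (φ : A →ₐ[R] B) (a : σ → Matrix n n A) (f : FreeAlgebra R σ) :
    (FreeAlgebra.lift R a f).map φ = FreeAlgebra.lift R (fun l ↦ (a l).map φ) f :=
  algHom_freeAlgebra_lift φ.mapMatrix a f

theorem reindex_freeAlgebra_lift (e : k ≃ n) (a : σ → Matrix k k A) (f : FreeAlgebra R σ) :
    Matrix.reindex e e (FreeAlgebra.lift R a f) =
      FreeAlgebra.lift R (fun l ↦ Matrix.reindex e e (a l)) f :=
  algHom_freeAlgebra_lift (Matrix.reindexAlgEquiv R A e : Matrix k k A →ₐ[R] Matrix n n A) a f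

theorem freeAlgebra_lift_fromBlocks (a : σ → Matrix k k A) (b : σ → Matrix r r A)
    (f : FreeAlgebra R σ) :
    FreeAlgebra.lift R (fun l ↦ Matrix.fromBlocks (a l) 0 0 (b l)) f =
      Matrix.fromBlocks (FreeAlgebra.lift R a f) 0 0 (FreeAlgebra.lift R b f) := by
  induction f using FreeAlgebra.induction with
  | grade0 c =>
    simp only [AlgHom.commutes, Algebra.algebraMap_eq_smul_one (A := Matrix _ _ A),
      ← Matrix.fromBlocks_one, Matrix.fromBlocks_smul, smul_zero]
  | grade1 l => simp only [FreeAlgebra.lift_ι_apply]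
  | mul f g hf hg => simp [hf, hg, Matrix.fromBlocks_multiply]
  | add f g hf hg => simp [hf, hg, Matrix.fromBlocks_add]

end FreeAlgebraLift

section Determinant

open Polynomial

variable {R n : Type*} [CommRing R] [Fintype n] [DecidableEq n]

theorem det_ne_zero_of_ne_zero_iff_perm [IsDomain R] {M : Matrix n n R} (π : Equiv.Perm n)
    (hM : ∀ i j, M i j ≠ 0 ↔ π i = j) : M.det ≠ 0 := by
  have hdiag : M.submatrix id π = Matrix.diagonal fun i ↦ M i (π i) := by
    ext i j
    obtain rfl | hij := eq_or_ne i j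
    · simp
    · rw [Matrix.diagonal_apply_ne _ hij, Matrix.submatrix_apply, id_eq]
      exact not_not.1 fun h ↦ hij <| π.injective ((hM _ _).1 h)
  have hdet : (M.submatrix id π).det ≠ 0 := by
    rw [hdiag, Matrix.det_diagonal, Finset.prod_ne_zero_iff]
    exact fun i _ ↦ (hM i _).2 rfl
  rw [Matrix.det_permute'] at hdet
  exact right_ne_zero_of_mul hdet

theorem coeff_det_card_mul {a : Matrix n n R[X]} {d : ℕ} (ha : ∀ i j, X ^ d ∣ a i j) :
    a.det.coeff (Fintype.card n * d) = (a.map (coeff · d)).det := by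
  choose q hq using ha
  have hsmul : a = (X ^ d : R[X]) • Matrix.of q := by
    ext1 i j
    simp [hq]
  have hcoeff : a.map (coeff · d) = constantCoeff.mapMatrix (Matrix.of q) := by
    ext i j
    simp [hq, coeff_X_pow_mul']
  rw [hcoeff, ← RingHom.map_det, hsmul, Matrix.det_smul, ← pow_mul, mul_comm d, coeff_X_pow_mul']
  simp

/-- The polynomial matrices, indexed by an additive monoid, whose coefficient of `X ^ d` is
supported on the shifted diagonal `j = i + ν d`. They are the elements of weight zero when `X ^ d`
has weight `-ν d` and the `(i, j)` matrix unit has weight `j - i`. -/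
def weightZeroSubalgebra [AddMonoid n] (R : Type*) [CommRing R] (ν : ℕ →+ n) :
    Subalgebra R (Matrix n n R[X]) where
  carrier := {a | ∀ i j d, (a i j).coeff d ≠ 0 → i + ν d = j}
  mul_mem' {a b} ha hb i j d h := by
    rw [Matrix.mul_apply, finsetSum_coeff] at h
    obtain ⟨k, -, hk⟩ := Finset.exists_ne_zero_of_sum_ne_zero h
    rw [coeff_mul] at hk
    obtain ⟨⟨d₁, d₂⟩, hd, hne⟩ := Finset.exists_ne_zero_of_sum_ne_zero hk
    rw [← Finset.HasAntidiagonal.mem_antidiagonal.1 hd, map_add, ← add_assoc,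
      ha _ _ _ (left_ne_zero_of_mul hne), hb _ _ _ (right_ne_zero_of_mul hne)]
  add_mem' {a b} ha hb i j d h := by
    by_contra hij
    exact h <| by
      rw [Matrix.add_apply, coeff_add, not_not.1 (mt (ha i j d) hij),
        not_not.1 (mt (hb i j d) hij), add_zero]
  algebraMap_mem' c i j d h := by
    rw [Matrix.algebraMap_matrix_apply, algebraMap_eq] at h
    split_ifs at h with hij
    · rw [coeff_C] at h
      split_ifs at h with hd
      · rw [hd, map_zero, add_zero, hij]
      · exact absurd rfl h
    · exact absurd (coeff_zero d) h

theorem det_ne_zero_of_mem_weightZeroSubalgebra [AddCommGroup n] [IsDomain R] {ν : ℕ →+ n}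
    {a : Matrix n n R[X]} (ha : a ∈ weightZeroSubalgebra R ν)
    (htrans : ∀ i j h d, (a i j).coeff d ≠ 0 → (a (i + h) (j + h)).coeff d ≠ 0) (ha₀ : a ≠ 0) :
    a.det ≠ 0 := by
  classical
  have hex : ∃ d i j, (a i j).coeff d ≠ 0 := by
    by_contra! h
    exact ha₀ <| Matrix.ext fun i j ↦ Polynomial.ext fun d ↦ h d i j
  set d := Nat.find hex
  obtain ⟨i₀, j₀, hd⟩ := Nat.find_spec hex
  have hdvd : ∀ i j, X ^ d ∣ a i j := fun i j ↦ X_pow_dvd_iff.2 fun d' hd' ↦ by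
    by_contra h
    exact Nat.find_min hex hd' ⟨i, j, h⟩
  have hlowest : ∀ i j, (a.map (coeff · d)) i j ≠ 0 ↔ Equiv.addRight (ν d) i = j := by
    refine fun i j ↦ ⟨ha i j d, ?_⟩
    rintro rfl
    have hshift := htrans i₀ j₀ (i - i₀) d hd
    rwa [← ha i₀ j₀ d hd, add_sub_cancel, add_right_comm, add_sub_cancel] at hshift
  refine fun h0 ↦ det_ne_zero_of_ne_zero_iff_perm _ hlowest ?_
  rw [← coeff_det_card_mul hdvd, h0, coeff_zero]

theorem exists_addCommGroup_surjective (n : Type*) [Finite n] [Nonempty n] :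
    ∃ (_ : AddCommGroup n) (ν : ℕ →+ n), Function.Surjective ν := by
  have : NeZero (Nat.card n) := ⟨Nat.card_pos.ne'⟩
  have e : n ≃ ZMod (Nat.card n) := (Finite.card_eq.1 (Nat.card_zmod _).symm).some
  let _ := e.addCommGroup
  refine ⟨inferInstance, e.addEquiv.symm.toAddMonoidHom.comp (Nat.castAddMonoidHom _), ?_⟩
  exact e.symm.surjective.comp ZMod.natCast_zmod_surjective

end Determinant

section CoeffSubalgebra

open Polynomial

theorem mem_lifts_of_mul_map_mem_lifts {R S : Type*} [Ring R] [CommRing S] (f : R →+* S) {p : S[X]}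
    {q : R[X]} (hq : q.Monic) (h : p * q.map f ∈ lifts f) : p ∈ lifts f := by
  obtain ⟨g, hg⟩ := (mem_lifts _).1 h
  refine (mem_lifts p).2 ⟨g /ₘ q, ?_⟩
  rw [map_divByMonic f hq, hg, mul_comm, mul_divByMonic_cancel_left _ (hq.map f)]

variable {R S T : Type*} [CommRing R] [CommRing S] [Algebra R S] [CommRing T] [Algebra R T]

/-- The `R`-subalgebra `R[p₀, p₁, …]` generated by the coefficients of a polynomial `p`. -/
def coeffSubalgebra (R : Type*) [CommRing R] [Algebra R S] (p : S[X]) : Subalgebra R S :=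
  Algebra.adjoin R (Set.range p.coeff)

theorem coeff_mem_coeffSubalgebra (p : S[X]) (i : ℕ) : p.coeff i ∈ coeffSubalgebra R p :=
  Algebra.subset_adjoin ⟨i, rfl⟩

theorem coeffSubalgebra_le_iff {p : S[X]} {B : Subalgebra R S} :
    coeffSubalgebra R p ≤ B ↔ p ∈ lifts (algebraMap B S) := by
  rw [coeffSubalgebra, Algebra.adjoin_le_iff, Set.range_subset_iff, lifts_iff_coeff_lifts]
  simp

theorem eval_algebraMap_mem_coeffSubalgebra (p : S[X]) (c : R) :
    p.eval (algebraMap R S c) ∈ coeffSubalgebra R p := by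
  rw [eval_eq_sum_range]
  exact sum_mem fun i _ ↦ mul_mem (coeff_mem_coeffSubalgebra p i) (pow_mem (algebraMap_mem _ c) i)

theorem coeffSubalgebra_map (φ : S →ₐ[R] T) (p : S[X]) :
    coeffSubalgebra R (p.map (φ : S →+* T)) = (coeffSubalgebra R p).map φ := by
  rw [coeffSubalgebra, coeffSubalgebra, AlgHom.map_adjoin, ← Set.range_comp]
  congr 2
  ext
  simp

theorem coeffSubalgebra_le_mul_map (p : S[X]) {q : R[X]} (hq : q.Monic) :
    coeffSubalgebra R p ≤ coeffSubalgebra R (p * q.map (algebraMap R S)) := by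
  rw [coeffSubalgebra_le_iff]
  refine mem_lifts_of_mul_map_mem_lifts _ (hq.map (algebraMap R _)) ?_
  rw [map_map, ← IsScalarTower.algebraMap_eq]
  exact coeffSubalgebra_le_iff.1 le_rfl

theorem coeffSubalgebra_X_pow_add_sum_le {n : ℕ} (c : Fin n → S) (e : Fin n → ℕ) :
    coeffSubalgebra R (X ^ n + ∑ i : Fin n, C ((-1) ^ ((i : ℕ) + 1) * c i) * X ^ e i) ≤
      Algebra.adjoin R (Set.range c) := by
  refine coeffSubalgebra_le_iff.2 <| add_mem (X_pow_mem_lifts _ n) <| sum_mem fun i _ ↦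
    mul_mem ?_ (X_pow_mem_lifts _ _)
  have hmem : (-1) ^ ((i : ℕ) + 1) * c i ∈ Algebra.adjoin R (Set.range c) :=
    mul_mem (pow_mem (neg_mem (one_mem _)) _) (Algebra.subset_adjoin ⟨i, rfl⟩)
  exact C'_mem_lifts ⟨⟨_, hmem⟩, rfl⟩

end CoeffSubalgebra

section TranscendenceDegree

variable {R : Type*} [CommRing R]

theorem algebraicIndependent_option_of_map_eq_zero {A B ι : Type*} [CommRing A] [IsDomain A]
    [CommRing B] [Algebra R A] [Algebra R B] (φ : A →ₐ[R] B) {a : ι → A}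
    (ha : AlgebraicIndependent R (φ ∘ a)) {δ : A} (hδ : δ ≠ 0) (hφδ : φ δ = 0) :
    AlgebraicIndependent R fun o : Option ι ↦ o.elim δ a := by
  have ha' : AlgebraicIndependent R a := .of_comp φ ha
  rw [ha'.option_iff_transcendental]
  intro hδ_alg
  -- A relation for `δ` with nonzero constant term maps to a relation between the `φ (a i)`.
  obtain ⟨q, hq₀, hq⟩ := hδ_alg.exists_nonzero_coeff_and_aeval_eq_zero
    (mem_nonZeroDivisors_of_ne_zero hδ)
  obtain ⟨p, hp⟩ : ∃ p, MvPolynomial.aeval a p = (q.coeff 0 : A) :=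
    (Algebra.adjoin_range_eq_range_aeval R a).le (q.coeff 0).2
  have hφq : φ (q.coeff 0) = 0 := by
    have hφ := congrArg φ hq
    rw [← q.divX_mul_X_add] at hφ
    simpa [hφδ] using hφ
  have hp₀ : p = 0 := ha <| by
    rw [map_zero, Function.comp_def, ← MvPolynomial.comp_aeval_apply, hp, hφq]
  exact hq₀ <| Subtype.ext <| by rw [← hp, hp₀, map_zero, ZeroMemClass.coe_zero]

theorem trdeg_add_one_le_of_surjective {A B : Type u} [CommRing A] [IsDomain A] [CommRing B]
    [IsDomain B] [Algebra R A] [Algebra R B] [FaithfulSMul R B] (φ : A →ₐ[R] B)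
    (hφ : Function.Surjective φ) {δ : A} (hδ : δ ≠ 0) (hφδ : φ δ = 0) :
    Algebra.trdeg R B + 1 ≤ Algebra.trdeg R A := by
  have : Nontrivial R := (algebraMap R B).domain_nontrivial
  obtain ⟨s, hs⟩ := exists_isTranscendenceBasis R B
  choose a ha using fun b : s ↦ hφ b
  have hind : AlgebraicIndependent R (φ ∘ a) := by
    rw [show φ ∘ a = Subtype.val from funext ha]
    exact hs.1
  rw [← hs.cardinalMk_eq_trdeg, ← Cardinal.mk_option]
  exact (algebraicIndependent_option_of_map_eq_zero φ hind hδ hφδ).cardinalMk_le_trdeg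

theorem faithfulSMul_subalgebra {A : Type*} [CommRing A] [Algebra R A] [FaithfulSMul R A]
    (S : Subalgebra R A) : FaithfulSMul R S :=
  (faithfulSMul_iff_algebraMap_injective R S).2 <|
    .of_comp (f := Subtype.val) (FaithfulSMul.algebraMap_injective R A)

theorem trdeg_add_one_le_of_le_map {A B : Type u} [CommRing A] [IsDomain A] [CommRing B]
    [IsDomain B] [Algebra R A] [Algebra R B] [FaithfulSMul R B] (φ : A →ₐ[R] B)
    {S : Subalgebra R B} {T : Subalgebra R A} (hST : S ≤ T.map φ) {δ : A} (hδT : δ ∈ T)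
    (hδ : δ ≠ 0) (hφδ : φ δ = 0) : Algebra.trdeg R S + 1 ≤ Algebra.trdeg R T := by
  have := faithfulSMul_subalgebra (T.map φ)
  have hS : Algebra.trdeg R S ≤ Algebra.trdeg R (T.map φ) :=
    trdeg_le_of_injective (Subalgebra.inclusion hST) (Subalgebra.inclusion_injective hST)
  refine (add_le_add_left hS 1).trans <| trdeg_add_one_le_of_surjective (AlgHom.subalgebraMap T φ)
    (AlgHom.subalgebraMap_surjective T φ) (δ := ⟨δ, hδT⟩) ?_ (Subtype.ext hφδ)
  exact fun h ↦ hδ (congrArg Subtype.val h)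

theorem trdeg_adjoin_le_trdeg_adjoin_field {F ι : Type*} {A K : Type u} [Field F] [CommRing A]
    [Field K] [Algebra F A] [Algebra A K] [Algebra F K] [IsScalarTower F A K] [FaithfulSMul A K]
    (c : ι → A) :
    Algebra.trdeg F (Algebra.adjoin F (Set.range c)) ≤
      Algebra.trdeg F (IntermediateField.adjoin F (Set.range fun i ↦ algebraMap A K (c i))) := by
  let g : A →ₐ[F] K := IsScalarTower.toAlgHom F A K
  have hle : (Algebra.adjoin F (Set.range c)).map g ≤
      (IntermediateField.adjoin F (Set.range fun i ↦ algebraMap A K (c i))).toSubalgebra := by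
    rw [AlgHom.map_adjoin, ← Set.range_comp]
    exact IntermediateField.algebra_adjoin_le_adjoin F _
  have hg : Function.Injective g := FaithfulSMul.algebraMap_injective A K
  rw [((Algebra.adjoin F (Set.range c)).equivMapOfInjective g hg).trdeg_eq]
  exact trdeg_le_of_injective (Subalgebra.inclusion hle) (Subalgebra.inclusion_injective hle)

theorem exists_finset_algebraicIndependent_of_le_trdeg {F K : Type*} [Field F] [Field K]
    [Algebra F K] (E : IntermediateField F K) {d : ℕ} (hd : (d : Cardinal) ≤ Algebra.trdeg F E) :
    ∃ s : Finset K, (s : Set K) ⊆ E ∧ s.card = d ∧ AlgebraicIndependent F ((↑) : s → K) := by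
  classical
  obtain ⟨t, ht⟩ := exists_isTranscendenceBasis F E
  rw [← ht.cardinalMk_eq_trdeg] at hd
  obtain ⟨p, hpt, hp⟩ := Cardinal.le_mk_iff_exists_subset.1 hd
  obtain ⟨s, rfl, hs⟩ := Cardinal.mk_set_eq_nat_iff_finset.1 hp
  have hind : AlgebraicIndependent F (E.val ∘ ((↑) : s → E)) :=
    (ht.1.mono hpt).map' (f := E.val) E.val.injective
  have hrange : Set.range (E.val ∘ ((↑) : s → E)) = s.image ((↑) : E → K) := by
    ext
    simp
  refine ⟨s.image (↑), ?_, (Finset.card_image_of_injective _ Subtype.val_injective).trans hs, ?_⟩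
  · rw [← hrange]
    exact Set.range_subset_iff.2 fun x ↦ x.1.2
  · have hcoe := hind.coe_range
    rw [hrange] at hcoe
    exact hcoe

end TranscendenceDegree

section GenericMatrix

open Polynomial

variable {R S σ n k r : Type*} [CommRing R] [CommRing S] [Algebra R S]

/-- The `l`-th generic `n × n` matrix over `R`, whose entries are distinct indeterminates. -/
noncomputable def genericMatrix (R n : Type*) {σ : Type*} [CommRing R] (l : σ) :
    Matrix n n (MvPolynomial (σ × n × n) R) :=
  Matrix.of fun i j ↦ MvPolynomial.X (l, i, j)

/-- The substitution homomorphism sending the generic matrices to the given matrices `a l`. -/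
noncomputable def specializeGeneric (R : Type*) [CommRing R] [Algebra R S]
    (a : σ → Matrix n n S) : MvPolynomial (σ × n × n) R →ₐ[R] S :=
  MvPolynomial.aeval fun x ↦ a x.1 x.2.1 x.2.2

/-- The `l`-th generic matrix with its `(i, j)` entry multiplied by `X ^ w (j - i)`. If `w` is a
section of a homomorphism `ℕ →+ n`, this matrix lies in `weightZeroSubalgebra`. -/
noncomputable def twistedGenericMatrix (R : Type*) [CommRing R] [Sub n] (w : n → ℕ) (l : σ) :
    Matrix n n (MvPolynomial (σ × n × n) R)[X] :=
  Matrix.of fun i j ↦ C (MvPolynomial.X (l, i, j)) * X ^ w (j - i)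

variable [Fintype n] [DecidableEq n] [Fintype k] [DecidableEq k]

theorem lift_genericMatrix_map_specializeGeneric (a : σ → Matrix n n S) (f : FreeAlgebra R σ) :
    (FreeAlgebra.lift R (genericMatrix R n) f).map (specializeGeneric R a) =
      FreeAlgebra.lift R a f := by
  have hgen : ∀ l, (genericMatrix R n l).map (specializeGeneric R a) = a l := fun l ↦ by
    ext
    simp [genericMatrix, specializeGeneric]
  simp only [freeAlgebra_lift_map, hgen]

theorem twistedGenericMatrix_mem_weightZeroSubalgebra [AddCommGroup n] {ν : ℕ →+ n} {w : n → ℕ}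
    (hw : ∀ i, ν (w i) = i) (l : σ) :
    twistedGenericMatrix R w l ∈ weightZeroSubalgebra (MvPolynomial (σ × n × n) R) ν := by
  intro i j d hd
  rw [twistedGenericMatrix, Matrix.of_apply, coeff_C_mul_X_pow] at hd
  rw [(ite_ne_right_iff.1 hd).1, hw, add_sub_cancel]

theorem lift_twistedGenericMatrix_map_eval_one [Sub n] (w : n → ℕ) (f : FreeAlgebra R σ) :
    (FreeAlgebra.lift R (twistedGenericMatrix R w) f).map (eval 1) =
      FreeAlgebra.lift R (genericMatrix R n) f := by
  let ε : (MvPolynomial (σ × n × n) R)[X] →ₐ[R] MvPolynomial (σ × n × n) R :=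
    (aeval (R := MvPolynomial (σ × n × n) R) 1).restrictScalars R
  have hε : ∀ l, (twistedGenericMatrix R w l).map ε = genericMatrix R n l := fun l ↦ by
    ext1 i j
    simp [ε, twistedGenericMatrix, genericMatrix]
  rw [← funext hε, ← freeAlgebra_lift_map]
  rfl

theorem lift_twistedGenericMatrix_add [AddCommGroup n] (w : n → ℕ) (f : FreeAlgebra R σ)
    (i j h : n) :
    FreeAlgebra.lift R (twistedGenericMatrix R w) f (i + h) (j + h) =
      (FreeAlgebra.lift R (twistedGenericMatrix R w) f i j).map
        (MvPolynomial.rename fun x : σ × n × n ↦ (x.1, x.2.1 + h, x.2.2 + h)).toRingHom := by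
  set τ := MvPolynomial.rename (R := R) fun x : σ × n × n ↦ (x.1, x.2.1 + h, x.2.2 + h)
  have htrans : ∀ l : σ, Matrix.reindex (Equiv.subRight h) (Equiv.subRight h)
      (twistedGenericMatrix R w l) = (twistedGenericMatrix R w l).map (mapAlgHom τ) := fun l ↦ by
    ext1 i j
    simp [τ, twistedGenericMatrix]
  have hlift := reindex_freeAlgebra_lift (Equiv.subRight h) (twistedGenericMatrix R w) f
  simp only [htrans, ← freeAlgebra_lift_map] at hlift
  exact congr_fun₂ hlift i j

theorem det_lift_twistedGenericMatrix_ne_zero [IsDomain R] [AddCommGroup n] {ν : ℕ →+ n}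
    {w : n → ℕ} (hw : ∀ i, ν (w i) = i) {f : FreeAlgebra R σ}
    (hf : FreeAlgebra.lift R (twistedGenericMatrix R w : σ → Matrix n n _) f ≠ 0) :
    (FreeAlgebra.lift R (twistedGenericMatrix R w : σ → Matrix n n _) f).det ≠ 0 := by
  refine det_ne_zero_of_mem_weightZeroSubalgebra (ν := ν) ?_ (fun i j h d hd ↦ ?_) hf
  · exact freeAlgebra_lift_mem ((weightZeroSubalgebra _ ν).restrictScalars R)
      (twistedGenericMatrix_mem_weightZeroSubalgebra hw) f
  · have hinj : Function.Injective fun x : σ × n × n ↦ (x.1, x.2.1 + h, x.2.2 + h) := by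
      rintro ⟨l, i, j⟩ ⟨l', i', j'⟩ hx
      simpa using hx
    rw [lift_twistedGenericMatrix_add, coeff_map]
    exact (map_ne_zero_iff _ (MvPolynomial.rename_injective _ hinj)).2 hd

theorem det_lift_genericMatrix_ne_zero [IsDomain R] {f : FreeAlgebra R σ}
    (hf : FreeAlgebra.lift R (genericMatrix R n) f ≠ 0) :
    (FreeAlgebra.lift R (genericMatrix R n) f).det ≠ 0 := by
  obtain _ | _ := isEmpty_or_nonempty n
  · exact absurd (Subsingleton.elim _ _) hf
  obtain ⟨_, ν, hν⟩ := exists_addCommGroup_surjective n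
  choose w hw using hν
  have htw : FreeAlgebra.lift R (twistedGenericMatrix R w) f ≠ 0 := fun h ↦ hf <| by
    rw [← lift_twistedGenericMatrix_map_eval_one w, h, Matrix.map_zero _ eval_zero]
  refine fun hdet ↦ det_lift_twistedGenericMatrix_ne_zero hw htw ?_
  rw [← lift_genericMatrix_map_specializeGeneric (twistedGenericMatrix R w) f]
  exact ((specializeGeneric R (twistedGenericMatrix R w)).map_det _).symm.trans
    (by rw [hdet, map_zero])

/-- The block matrix `diag(a, 0)`, reindexed along `k ⊕ r ≃ n`. -/
def padZero (e : k ⊕ r ≃ n) (a : Matrix k k S) : Matrix n n S :=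
  Matrix.reindex e e (Matrix.fromBlocks a 0 0 0)

theorem lift_padZero [Fintype r] [DecidableEq r] (e : k ⊕ r ≃ n) (a : σ → Matrix k k S)
    (f : FreeAlgebra R σ) :
    FreeAlgebra.lift R (fun l ↦ padZero e (a l)) f = Matrix.reindex e e
      (Matrix.fromBlocks (FreeAlgebra.lift R a f) 0 0
        (algebraMap R (Matrix r r S) (FreeAlgebra.algebraMapInv f))) := by
  rw [← freeAlgebra_lift_zero, ← freeAlgebra_lift_fromBlocks, reindex_freeAlgebra_lift]
  rfl

theorem charpoly_lift_padZero [Fintype r] (e : k ⊕ r ≃ n) (a : σ → Matrix k k S)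
    (f : FreeAlgebra R σ) :
    (FreeAlgebra.lift R (fun l ↦ padZero e (a l)) f).charpoly =
      (FreeAlgebra.lift R a f).charpoly *
        (X - C (algebraMap R S (FreeAlgebra.algebraMapInv f))) ^ Fintype.card r := by
  classical
  rw [lift_padZero, Matrix.charpoly_reindex, Matrix.charpoly_fromBlocks_zero₁₂,
    Matrix.algebraMap_eq_diagonal, Matrix.charpoly_diagonal]
  simp

theorem lift_genericMatrix_ne_algebraMap (hkn : Fintype.card k ≤ Fintype.card n)
    {f : FreeAlgebra R σ}
    (hf : ∃ a b : σ → Matrix k k R, FreeAlgebra.lift R a f ≠ FreeAlgebra.lift R b f) (c : R) :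
    FreeAlgebra.lift R (genericMatrix R n) f ≠ algebraMap R _ c := by
  obtain ⟨a, b, hab⟩ := hf
  let e : k ⊕ Fin (Fintype.card n - Fintype.card k) ≃ n := Fintype.equivOfCardEq (by simp [hkn])
  intro hc
  have hconst (a : σ → Matrix n n R) : FreeAlgebra.lift R a f = algebraMap R _ c := by
    rw [← lift_genericMatrix_map_specializeGeneric, hc]
    exact (specializeGeneric R a).mapMatrix.commutes c
  have hpad := (hconst fun l ↦ padZero e (a l)).trans (hconst fun l ↦ padZero e (b l)).symm
  rw [lift_padZero, lift_padZero, (Matrix.reindex e e).apply_eq_iff_eq,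
    Matrix.fromBlocks_inj] at hpad
  exact hab hpad.1

/-- The characteristic polynomial of the value of `f` at the generic `n × n` matrices. -/
noncomputable def genericCharpoly (n : Type*) [Fintype n] [DecidableEq n] (f : FreeAlgebra R σ) :
    (MvPolynomial (σ × n × n) R)[X] :=
  (FreeAlgebra.lift R (genericMatrix R n) f).charpoly

theorem genericCharpoly_map_specializeGeneric (a : σ → Matrix n n S) (f : FreeAlgebra R σ) :
    (genericCharpoly n f).map (specializeGeneric R a : _ →+* S) =
      (FreeAlgebra.lift R a f).charpoly := by
  rw [genericCharpoly, ← Matrix.charpoly_map]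
  exact congrArg Matrix.charpoly (lift_genericMatrix_map_specializeGeneric a f)

theorem eval_genericCharpoly_ne_zero [IsDomain R] {f : FreeAlgebra R σ} {c : R}
    (hf : FreeAlgebra.lift R (genericMatrix R n) f ≠ algebraMap R _ c) :
    (genericCharpoly n f).eval (algebraMap R _ c) ≠ 0 := by
  have hsub : FreeAlgebra.lift R (genericMatrix R n) (algebraMap R _ c - f) ≠ 0 := by
    rw [map_sub, AlgHom.commutes]
    exact sub_ne_zero.2 hf.symm
  have hdet := det_lift_genericMatrix_ne_zero hsub
  rw [map_sub, AlgHom.commutes] at hdet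
  rwa [genericCharpoly, Matrix.eval_charpoly]

theorem trdeg_genericCharpoly_add_one_le {n k : Type u} [Fintype n] [DecidableEq n] [Fintype k]
    [DecidableEq k] [IsDomain R] [Finite r] [Nonempty r] (e : k ⊕ r ≃ n) {f : FreeAlgebra R σ}
    (hf : ∀ c, FreeAlgebra.lift R (genericMatrix R n) f ≠ algebraMap R _ c) :
    Algebra.trdeg R (coeffSubalgebra R (genericCharpoly k f)) + 1 ≤
      Algebra.trdeg R (coeffSubalgebra R (genericCharpoly n f)) := by
  have := Fintype.ofFinite r
  let c : R := FreeAlgebra.algebraMapInv f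
  let φ := specializeGeneric R fun l : σ ↦ padZero e (genericMatrix R k l)
  have hφ : (genericCharpoly n f).map (φ : _ →+* _) =
      genericCharpoly k f * (X - C (algebraMap R _ c)) ^ Fintype.card r := by
    rw [genericCharpoly_map_specializeGeneric, charpoly_lift_padZero, genericCharpoly]
  refine trdeg_add_one_le_of_le_map φ ?_ (eval_algebraMap_mem_coeffSubalgebra _ c)
    (eval_genericCharpoly_ne_zero (hf c)) ?_
  · rw [← coeffSubalgebra_map, hφ]
    convert coeffSubalgebra_le_mul_map (genericCharpoly k f)
      ((monic_X_sub_C c).pow (Fintype.card r))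
    simp
  · calc φ ((genericCharpoly n f).eval (algebraMap R _ c))
        = ((genericCharpoly n f).map (φ : _ →+* _)).eval (algebraMap R _ c) := by
          rw [← φ.commutes, ← AlgHom.coe_toRingHom, eval_map_apply]
      _ = 0 := by simp [hφ]

theorem natCast_le_trdeg_genericCharpoly [IsDomain R] (k r : ℕ) {f : FreeAlgebra R σ}
    (hf : ∃ a b : σ → Matrix (Fin (k + 1)) (Fin (k + 1)) R,
      FreeAlgebra.lift R a f ≠ FreeAlgebra.lift R b f) :
    (r : Cardinal) ≤ Algebra.trdeg R (coeffSubalgebra R (genericCharpoly (Fin (k + r)) f)) := by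
  induction r with
  | zero => simp
  | succ r ih =>
    rw [Nat.cast_succ]
    refine (add_le_add_left ih 1).trans <|
      trdeg_genericCharpoly_add_one_le (finSumFinEquiv (m := k + r) (n := 1)) fun c ↦ ?_
    exact lift_genericMatrix_ne_algebraMap (by simp) hf c

end GenericMatrix

theorem trdeg_of_charpoly_coeffs_general {F σ : Type*} [Field F] {k n : ℕ} (hkn : k ≤ n)
    {f : FreeAlgebra F σ}
    (hf : ∃ a b : σ → Matrix (Fin k) (Fin k) F, FreeAlgebra.lift F a f ≠ FreeAlgebra.lift F b f)
    (c : Fin n → MvPolynomial (σ × Fin n × Fin n) F)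
    (hc : (FreeAlgebra.lift F (fun ℓ ↦ (Matrix.of fun i j ↦ MvPolynomial.X (ℓ, i, j) :
        Matrix (Fin n) (Fin n) (MvPolynomial (σ × Fin n × Fin n) F))) f).charpoly =
      Polynomial.X ^ n + ∑ i : Fin n,
        Polynomial.C ((-1) ^ ((i : ℕ) + 1) * c i) * Polynomial.X ^ (n - ((i : ℕ) + 1))) :
    ((n - k + 1 : ℕ) : Cardinal) ≤ Algebra.trdeg F (IntermediateField.adjoin F (Set.range fun i ↦
      algebraMap _ (FractionRing (MvPolynomial (σ × Fin n × Fin n) F)) (c i))) := by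
  obtain _ | k := k
  · obtain ⟨a, b, hab⟩ := hf
    exact absurd (Subsingleton.elim _ _) hab
  obtain ⟨r, rfl⟩ := Nat.exists_eq_add_of_le (Nat.le_of_succ_le hkn)
  have hr : k + r - (k + 1) + 1 = r := by omega
  have hcoeff : coeffSubalgebra F (genericCharpoly (Fin (k + r)) f) ≤
      Algebra.adjoin F (Set.range c) :=
    (congrArg (coeffSubalgebra F) hc).trans_le (coeffSubalgebra_X_pow_add_sum_le c _)
  rw [hr]
  calc (r : Cardinal)
      ≤ Algebra.trdeg F (coeffSubalgebra F (genericCharpoly (Fin (k + r)) f)) :=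
        natCast_le_trdeg_genericCharpoly k r hf
    _ ≤ Algebra.trdeg F (Algebra.adjoin F (Set.range c)) :=
        trdeg_le_of_injective (Subalgebra.inclusion hcoeff) (Subalgebra.inclusion_injective hcoeff)
    _ ≤ _ := trdeg_adjoin_le_trdeg_adjoin_field c

/-- Let `F` be algebraically closed, `f` noncentral on `M_k(F)`, `n ≥ k`, and let
`Y₁,…,Y_m` be the generic `n × n` matrices over `R = F[x^{(ℓ)}_{i,j}]`. If
`c₁,…,c_n ∈ R` are the coefficients of the characteristic polynomial of
`f(Y₁,…,Y_m)`, i.e. the characteristic polynomial is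
`tⁿ - c₁ tⁿ⁻¹ + c₂ tⁿ⁻² - ⋯ + (-1)ⁿ c_n`, then the subfield `F(c₁,…,c_n)` of
`K = Frac R` has transcendence degree at least `n - k` over `F`, i.e. it contains
`n - k` elements algebraically independent over `F`. -/
theorem trdeg_of_charpoly_coeffs (F : Type) [Field F] [IsAlgClosed F] (m k n : ℕ)
    (hk : 1 ≤ k) (hkn : k ≤ n) (f : FreeAlgebra F (Fin m))
    (hnc : ∃ a : Fin m → Matrix (Fin k) (Fin k) F,
      ∀ c : F, FreeAlgebra.lift F a f ≠ c • (1 : Matrix (Fin k) (Fin k) F))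
    (c : Fin n → MvPolynomial (Fin m × Fin n × Fin n) F)
    (hc : Matrix.charpoly
        (FreeAlgebra.lift F (fun ℓ : Fin m =>
          (Matrix.of fun i j : Fin n => MvPolynomial.X (ℓ, i, j) :
            Matrix (Fin n) (Fin n) (MvPolynomial (Fin m × Fin n × Fin n) F))) f)
      = Polynomial.X ^ n + ∑ i : Fin n,
          Polynomial.C ((-1) ^ ((i : ℕ) + 1) * c i) * Polynomial.X ^ (n - ((i : ℕ) + 1))) :
    ∃ s : Finset (FractionRing (MvPolynomial (Fin m × Fin n × Fin n) F)),
      (↑s : Set (FractionRing (MvPolynomial (Fin m × Fin n × Fin n) F))) ⊆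
        (IntermediateField.adjoin F
          (Set.range fun i : Fin n =>
            algebraMap (MvPolynomial (Fin m × Fin n × Fin n) F)
              (FractionRing (MvPolynomial (Fin m × Fin n × Fin n) F)) (c i)) :
          Set (FractionRing (MvPolynomial (Fin m × Fin n × Fin n) F))) ∧
      s.card = n - k ∧
      AlgebraicIndependent F
        ((↑) : s → FractionRing (MvPolynomial (Fin m × Fin n × Fin n) F)) := by
  obtain ⟨a, ha⟩ := hnc
  have hf : FreeAlgebra.lift F a f ≠ FreeAlgebra.lift F 0 f := by
    rw [freeAlgebra_lift_zero, Algebra.algebraMap_eq_smul_one]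
    exact ha _
  apply exists_finset_algebraicIndependent_of_le_trdeg
  exact (Nat.cast_le.2 (Nat.le_succ _)).trans
    (trdeg_of_charpoly_coeffs_general hkn ⟨a, 0, hf⟩ c hc)
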